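/- arXiv:1409.0668 — 2 statements merged into one kernel-verified Lean document; each statement's English description precedes it below -/
import Mathlib

section
/- The set {x⃗ ∈ 𝕃 : 0 ≤ x⃗ and not ω⃗ ≤ x⃗} equals the interval [0, δ⃗], where δ⃗ := d c⃗ + 2 ω⃗. -/
/-- The subgroup of relations `p i • x⃗_i − c⃗` inside the free abelian group
`(Fin n → ℤ) × ℤ` on the generators `x⃗_1, …, x⃗_n, c⃗`. -/
def GLrels (n : ℕ) (p : Fin n → ℕ) : AddSubgroup ((Fin n → ℤ) × ℤ) :=
  AddSubgroup.closure (Set.range fun i : Fin n => ((Pi.single i (p i : ℤ), -1) : (Fin n → ℤ) × ℤ))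

/-- The grading group `𝕃 = ⟨x⃗_1, …, x⃗_n, c⃗⟩ / ⟨p_i x⃗_i − c⃗⟩`. -/
abbrev GLgroup (n : ℕ) (p : Fin n → ℕ) : Type :=
  ((Fin n → ℤ) × ℤ) ⧸ GLrels n p

/-- The generator `x⃗_i` of `𝕃`. -/
def GLx (n : ℕ) (p : Fin n → ℕ) (i : Fin n) : GLgroup n p :=
  QuotientAddGroup.mk (Pi.single i 1, 0)

/-- The generator `c⃗` of `𝕃`. -/
def GLc (n : ℕ) (p : Fin n → ℕ) : GLgroup n p :=
  QuotientAddGroup.mk (0, 1)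

/-- The positive cone `𝕃_+`: the submonoid of `𝕃` generated by `x⃗_1, …, x⃗_n` and `c⃗`. -/
def GLplus (n : ℕ) (p : Fin n → ℕ) : AddSubmonoid (GLgroup n p) :=
  AddSubmonoid.closure ({GLc n p} ∪ Set.range (GLx n p))

/-- The partial order relation on `𝕃`: `x⃗ ≤ y⃗` iff `y⃗ − x⃗ ∈ 𝕃_+`. -/
def GLle (n : ℕ) (p : Fin n → ℕ) (x y : GLgroup n p) : Prop :=
  y - x ∈ GLplus n p

/-- The dualizing element `ω⃗ = (n − d − 1) c⃗ − Σ_i x⃗_i` of `𝕃`. -/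
def GLomega (d n : ℕ) (p : Fin n → ℕ) : GLgroup n p :=
  ((n : ℤ) - d - 1) • GLc n p - ∑ i, GLx n p i

/-- The dominant element `δ⃗ = d c⃗ + 2 ω⃗`. -/
def GLdelta (d n : ℕ) (p : Fin n → ℕ) : GLgroup n p :=
  (d : ℤ) • GLc n p + (2 : ℤ) • GLomega d n p

/-!
Every `y⃗ ∈ 𝕃` has a normal form `∑ aᵢ x⃗ᵢ + a c⃗` with `0 ≤ aᵢ < pᵢ`, and `y⃗ ∈ 𝕃₊` exactly when
`a ≥ 0`. The reflection `y⃗ ↦ d c⃗ + ω⃗ - y⃗` replaces `aᵢ` by `pᵢ - 1 - aᵢ` and `a` by `-1 - a`, so it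
exchanges `𝕃₊` with its complement. Apply this to `y⃗ = x⃗ - ω⃗`, whose reflection is `δ⃗ - x⃗`.
-/

theorem neg_one_sub_ediv {b : ℤ} (hb : 0 < b) (a : ℤ) : (-1 - a) / b = -1 - a / b := by
  have hdiv := Int.emod_add_mul_ediv a b
  have hnonneg := Int.emod_nonneg a hb.ne'
  have hlt := Int.emod_lt_of_pos a hb
  exact ((Int.ediv_emod_unique (r := b - 1 - a % b) hb).2 ⟨by linarith, by lia, by lia⟩).1

theorem zsmul_mem_of_nonneg {G : Type*} [AddGroup G] {S : AddSubmonoid G} {a : ℤ} (ha : 0 ≤ a)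
    {g : G} (hg : g ∈ S) : a • g ∈ S := by
  lift a to ℕ using ha
  simpa only [natCast_zsmul] using nsmul_mem hg a

namespace GLgroup

variable {n : ℕ} {p : Fin n → ℕ}

theorem mk_eq_sum (w : (Fin n → ℤ) × ℤ) :
    (w : GLgroup n p) = ∑ i, w.1 i • GLx n p i + w.2 • GLc n p := by
  have hw : w = ∑ i, w.1 i • (Pi.single i 1, 0) + w.2 • (0, 1) := by
    ext <;> simp [Prod.fst_sum, Prod.snd_sum, Pi.single_apply]
  calc (w : GLgroup n p)
    _ = QuotientAddGroup.mk' (GLrels n p) (∑ i, w.1 i • (Pi.single i 1, 0) + w.2 • (0, 1)) :=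
      congrArg _ hw
    _ = ∑ i, w.1 i • GLx n p i + w.2 • GLc n p := by
      simp only [map_add, map_sum, map_zsmul]
      rfl

theorem zsmul_GLx (i : Fin n) : (p i : ℤ) • GLx n p i = GLc n p := by
  refine QuotientAddGroup.eq_iff_sub_mem.2 (AddSubgroup.subset_closure ⟨i, ?_⟩)
  ext <;> simp [Pi.single_apply]

theorem exists_eq_of_mem_GLrels {r : (Fin n → ℤ) × ℤ} (hr : r ∈ GLrels n p) :
    ∃ k : Fin n → ℤ, r = (fun i => p i * k i, -∑ i, k i) := by
  obtain ⟨k, rfl⟩ := AddSubgroup.mem_closure_range_iff_of_fintype.1 hr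
  refine ⟨k, ?_⟩
  ext <;> simp [Prod.fst_sum, Prod.snd_sum, Pi.single_apply, mul_comm]

section cCoeff

variable [∀ i, NeZero (p i)]

theorem weight_pos (i : Fin n) : (0 : ℤ) < p i :=
  Int.natCast_pos.2 (NeZero.pos (p i))

/-- The coefficient of `c⃗` in the normal form `∑ aᵢ x⃗ᵢ + a c⃗`, `0 ≤ aᵢ < pᵢ`, of an element of
`𝕃`, computed from any representative by dividing its `x⃗ᵢ`-coefficients by `pᵢ` with remainder. -/
def cCoeff : GLgroup n p → ℤ :=
  Quotient.lift (fun w : (Fin n → ℤ) × ℤ => w.2 + ∑ i, w.1 i / (p i : ℤ)) fun v w h => by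
    obtain ⟨k, hk⟩ := exists_eq_of_mem_GLrels (QuotientAddGroup.leftRel_apply.1 h)
    obtain rfl : w = v + (fun i => p i * k i, -∑ i, k i) := by rw [← hk, add_neg_cancel_left]
    simp only [Prod.fst_add, Prod.snd_add, Pi.add_apply,
      Int.add_mul_ediv_left _ _ (weight_pos _).ne', Finset.sum_add_distrib]
    ring

theorem cCoeff_mk (w : (Fin n → ℤ) × ℤ) :
    cCoeff (w : GLgroup n p) = w.2 + ∑ i, w.1 i / (p i : ℤ) :=
  rfl

theorem mk_eq_normalForm (w : (Fin n → ℤ) × ℤ) :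
    (w : GLgroup n p) =
      ∑ i, (w.1 i % (p i : ℤ)) • GLx n p i + cCoeff (w : GLgroup n p) • GLc n p := by
  have split_term (i : Fin n) : w.1 i • GLx n p i =
      (w.1 i % (p i : ℤ)) • GLx n p i + (w.1 i / (p i : ℤ)) • GLc n p := by
    rw [← zsmul_GLx i, ← mul_zsmul', ← add_zsmul, Int.emod_add_mul_ediv]
  have sum_zsmul_GLc :
      (∑ i, w.1 i / (p i : ℤ)) • GLc n p = ∑ i, (w.1 i / (p i : ℤ)) • GLc n p :=
    map_sum (zmultiplesHom (GLgroup n p) (GLc n p)) _ _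
  rw [cCoeff_mk, mk_eq_sum, add_zsmul, sum_zsmul_GLc]
  simp only [split_term, Finset.sum_add_distrib]
  abel

theorem cCoeff_add_le (x y : GLgroup n p) : cCoeff x + cCoeff y ≤ cCoeff (x + y) := by
  obtain ⟨v, rfl⟩ := QuotientAddGroup.mk_surjective x
  obtain ⟨w, rfl⟩ := QuotientAddGroup.mk_surjective y
  rw [← QuotientAddGroup.mk_add, cCoeff_mk, cCoeff_mk, cCoeff_mk, add_add_add_comm,
    ← Finset.sum_add_distrib]
  exact add_le_add le_rfl (Finset.sum_le_sum fun i _ =>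
    Int.ediv_add_ediv_le_add_ediv (weight_pos i))

theorem cCoeff_nonneg_of_mem_GLplus {y : GLgroup n p} (hy : y ∈ GLplus n p) : 0 ≤ cCoeff y := by
  induction hy using AddSubmonoid.closure_induction with
  | mem y hy =>
    rcases hy with rfl | ⟨i, rfl⟩
    · simp [GLc, cCoeff_mk]
    · have single_nonneg : (0 : Fin n → ℤ) ≤ Pi.single i 1 := Pi.single_nonneg.2 zero_le_one
      rw [GLx, cCoeff_mk, zero_add]
      exact Finset.sum_nonneg fun j _ => Int.ediv_nonneg (single_nonneg j) (p j).cast_nonneg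
  | zero => simp [← QuotientAddGroup.mk_zero, cCoeff_mk]
  | add x y _ _ hx hy => exact (add_nonneg hx hy).trans (cCoeff_add_le x y)

theorem mem_GLplus_iff {y : GLgroup n p} : y ∈ GLplus n p ↔ 0 ≤ cCoeff y := by
  refine ⟨cCoeff_nonneg_of_mem_GLplus, fun h => ?_⟩
  obtain ⟨w, rfl⟩ := QuotientAddGroup.mk_surjective y
  have GLx_mem (i : Fin n) : GLx n p i ∈ GLplus n p := AddSubmonoid.subset_closure (.inr ⟨i, rfl⟩)
  have GLc_mem : GLc n p ∈ GLplus n p := AddSubmonoid.subset_closure (.inl rfl)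
  rw [mk_eq_normalForm]
  exact add_mem
    (sum_mem fun i _ =>
      zsmul_mem_of_nonneg (Int.emod_nonneg _ (weight_pos i).ne') (GLx_mem i))
    (zsmul_mem_of_nonneg h GLc_mem)

theorem cCoeff_reflection (d : ℕ) (y : GLgroup n p) :
    cCoeff ((d : ℤ) • GLc n p + GLomega d n p - y) = -1 - cCoeff y := by
  obtain ⟨w, rfl⟩ := QuotientAddGroup.mk_surjective y
  have reflection_mk : (d : ℤ) • GLc n p + GLomega d n p - (w : GLgroup n p) =
      ((fun i => -1 - w.1 i, (n : ℤ) - 1 - w.2) : (Fin n → ℤ) × ℤ) := by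
    rw [mk_eq_sum, mk_eq_sum, GLomega]
    simp only [sub_smul, neg_smul, one_smul, Finset.sum_sub_distrib, Finset.sum_neg_distrib]
    abel
  rw [reflection_mk, cCoeff_mk, cCoeff_mk]
  simp only [neg_one_sub_ediv (weight_pos _), Finset.sum_sub_distrib, Finset.sum_const,
    Finset.card_univ, Fintype.card_fin, nsmul_eq_mul]
  ring

theorem reflection_mem_GLplus_iff (d : ℕ) (y : GLgroup n p) :
    (d : ℤ) • GLc n p + GLomega d n p - y ∈ GLplus n p ↔ y ∉ GLplus n p := by
  rw [mem_GLplus_iff, mem_GLplus_iff, cCoeff_reflection]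
  lia

end cCoeff

end GLgroup

/-- `{x⃗ ∈ 𝕃 : 0 ≤ x⃗ and ¬ ω⃗ ≤ x⃗} = [0, δ⃗]` where `δ⃗ = d c⃗ + 2 ω⃗`. -/
theorem interval_dominant (d n : ℕ) (hd : 1 ≤ d) (p : Fin n → ℕ) (hp : ∀ i, 0 < p i) :
    {x : GLgroup n p | GLle n p 0 x ∧ ¬ GLle n p (GLomega d n p) x} =
      {x : GLgroup n p | GLle n p 0 x ∧ GLle n p x (GLdelta d n p)} := by
  have (i : Fin n) : NeZero (p i) := ⟨(hp i).ne'⟩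
  have reflection_sub_omega (x : GLgroup n p) :
      (d : ℤ) • GLc n p + GLomega d n p - (x - GLomega d n p) = GLdelta d n p - x := by
    rw [GLdelta, two_zsmul]
    abel
  ext x
  refine and_congr_right fun _ => ?_
  rw [GLle, GLle, ← GLgroup.reflection_mem_GLplus_iff d, reflection_sub_omega]
end

section
/- Assume n ≥ d + 1 and that the hyperplanes are in general position. Let J ⊆ {1,…,n} with |J| = n − d − 1 and let J^c be its complement, so |J^c| = d + 1. Then the images of the elements X_i^{p_i} for i ∈ J^c form a regular sequence in R, and the quotient ring F := R/(X_i^{p_i} ∣ i ∈ J^c) is a finite-dimensional k-vector space. -/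
open MvPolynomial

/-- The polynomial `h_i = X_i^{p_i} − ℓ_i` in `S = k[T_0,…,T_d, X_1,…,X_n]`, where
`ℓ_i = Σ_j λ_{ij} T_j`; the `T`'s are the variables indexed by `Sum.inl` and the `X`'s
are the variables indexed by `Sum.inr`. -/
noncomputable def GLh (k : Type*) [Field k] (d n : ℕ) (p : Fin n → ℕ)
    (lam : Fin n → Fin (d + 1) → k) (i : Fin n) :
    MvPolynomial (Fin (d + 1) ⊕ Fin n) k :=
  X (Sum.inr i) ^ p i - ∑ j, C (lam i j) * X (Sum.inl j)

/-- The Geigle–Lenzing complete intersection `R = S/(h_1, …, h_n)`. -/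
abbrev GLring (k : Type*) [Field k] (d n : ℕ) (p : Fin n → ℕ)
    (lam : Fin n → Fin (d + 1) → k) : Type _ :=
  MvPolynomial (Fin (d + 1) ⊕ Fin n) k ⧸ Ideal.span (Set.range (GLh k d n p lam))

/-!
The ring `R` arises from `k[T_0, …, T_d]` by adjoining a root of each of the monic polynomials
`X ^ p_i - ℓ_i`, so it is the tensor product of the algebras `k[T][X] / (X ^ p_i - ℓ_i)`. It is
therefore finite free of positive rank, hence finite and faithfully flat, over `k[T]`, and
`X_i ^ p_i` is the image of `ℓ_i`. Linearly independent linear forms are part of a system of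
variables of `k[T]`, so they form a regular sequence, and regular sequences ascend along faithfully
flat homomorphisms. If the forms `ℓ_i`, `i ∈ I`, span all linear forms, then the quotient of `R` by
their images is finite over `k[T] / (T_0, …, T_d) = k`.
-/

universe u v

section AdjoinRoots

open scoped Polynomial TensorProduct

variable {σ : Type u} {A : Type v} [CommRing A] (f : σ → A[X])

/-- The universal `A`-algebra `A[X_i : i ∈ σ] / (f_i(X_i) : i ∈ σ)` with a chosen root of each
polynomial `f_i`; the version of `AdjoinRoot` for a family of polynomials. -/
abbrev AdjoinRoots : Type max u v :=
  MvPolynomial σ A ⧸ Ideal.span (Set.range fun i => Polynomial.aeval (X i : MvPolynomial σ A) (f i))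

namespace AdjoinRoots

/-- The chosen root of `f i` in `AdjoinRoots f`. -/
noncomputable def root (i : σ) : AdjoinRoots f :=
  Ideal.Quotient.mk _ (X i)

theorem aeval_root (i : σ) : Polynomial.aeval (root f i) (f i) = 0 := by
  rw [root, ← Ideal.Quotient.mkₐ_eq_mk A, Polynomial.aeval_algHom_apply, Ideal.Quotient.mkₐ_eq_mk,
    Ideal.Quotient.eq_zero_iff_mem]
  exact Ideal.subset_span ⟨i, rfl⟩

variable {f}

theorem algHom_ext {S : Type*} [Semiring S] [Algebra A S] {g h : AdjoinRoots f →ₐ[A] S}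
    (H : ∀ i, g (root f i) = h (root f i)) : g = h :=
  Ideal.Quotient.algHom_ext _ <| MvPolynomial.algHom_ext H

section Lift

variable {S : Type*} [CommRing S] [Algebra A S] (x : σ → S)
  (hx : ∀ i, Polynomial.aeval (x i) (f i) = 0)

/-- The algebra homomorphism out of `AdjoinRoots f` determined by a root of each `f i`. -/
noncomputable def lift : AdjoinRoots f →ₐ[A] S :=
  Ideal.Quotient.liftₐ _ (aeval x) fun a ha => by
    refine (Ideal.span_le (I := RingHom.ker (aeval x))).mpr ?_ ha
    rintro _ ⟨i, rfl⟩
    simp [← Polynomial.aeval_algHom_apply, hx]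

@[simp]
theorem lift_root (i : σ) : lift x hx (root f i) = x i :=
  (Ideal.Quotient.liftₐ_apply ..).trans (aeval_X x i)

end Lift

section PiTensorProduct

variable (f)

/-- The inclusion of the `i`-th factor `A[X] / (f_i)` into `AdjoinRoots f`. -/
noncomputable def ofAdjoinRoot (i : σ) : AdjoinRoot (f i) →ₐ[A] AdjoinRoots f :=
  AdjoinRoot.liftAlgHom (f i) (Algebra.ofId A _) (root f i) <| by
    rw [Algebra.toRingHom_ofId, ← Polynomial.aeval_def, aeval_root]

@[simp]
theorem ofAdjoinRoot_root (i : σ) : ofAdjoinRoot f i (AdjoinRoot.root (f i)) = root f i :=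
  AdjoinRoot.liftAlgHom_root ..

variable [Fintype σ] [DecidableEq σ]

/-- The canonical map from the tensor product of the algebras `A[X] / (f_i)` to `AdjoinRoots f`. -/
noncomputable def ofPiTensorProduct : (⨂[A] i, AdjoinRoot (f i)) →ₐ[A] AdjoinRoots f :=
  PiTensorProduct.liftAlgHom
    ((MultilinearMap.mkPiAlgebra A σ (AdjoinRoots f)).compLinearMap
      fun i => (ofAdjoinRoot f i).toLinearMap)
    (by simp) (by simp [Finset.prod_mul_distrib])

@[simp]
theorem ofPiTensorProduct_tprod_mulSingle (i : σ) :
    ofPiTensorProduct f (PiTensorProduct.tprod A (Pi.mulSingle i (AdjoinRoot.root (f i)))) =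
      root f i := by
  refine (PiTensorProduct.lift.tprod _).trans ?_
  simp [Pi.apply_mulSingle (fun j y => ofAdjoinRoot f j y)]

/-- `A[X_i : i ∈ σ] / (f_i(X_i) : i ∈ σ)` is the tensor product of the algebras `A[X] / (f_i)`. -/
noncomputable def equivPiTensorProduct : AdjoinRoots f ≃ₐ[A] ⨂[A] i, AdjoinRoot (f i) :=
  AlgEquiv.ofAlgHom
    (lift (fun i => PiTensorProduct.singleAlgHom i (AdjoinRoot.root (f i))) fun i => by
      rw [Polynomial.aeval_algHom_apply, AdjoinRoot.aeval_eq, AdjoinRoot.mk_self, map_zero])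
    (ofPiTensorProduct f)
    (PiTensorProduct.algHom_ext fun i => AdjoinRoot.algHom_ext <| by simp)
    (algHom_ext fun i => by simp)

end PiTensorProduct

variable [Finite σ]

/-- The basis of monomials in the roots in which the exponent of the `i`-th root is less than the
degree of `f i`. -/
noncomputable def basis (hf : ∀ i, (f i).Monic) :
    Module.Basis (∀ i, Fin (f i).natDegree) A (AdjoinRoots f) := by
  classical
  have := Fintype.ofFinite σ
  exact (Basis.piTensorProduct fun i => (AdjoinRoot.powerBasis' (hf i)).basis).map
    (equivPiTensorProduct f).symm.toLinearEquiv

theorem finite_of_monic (hf : ∀ i, (f i).Monic) : Module.Finite A (AdjoinRoots f) :=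
  .of_basis (basis hf)

theorem faithfullyFlat_of_monic (hf : ∀ i, (f i).Monic) (hdeg : ∀ i, 0 < (f i).natDegree) :
    Module.FaithfullyFlat A (AdjoinRoots f) :=
  haveI : ∀ i, NeZero (f i).natDegree := fun i => ⟨(hdeg i).ne'⟩
  .of_linearEquiv _ _ (basis hf).repr

end AdjoinRoots
end AdjoinRoots

section RegularSequence

open RingTheory.Sequence

theorem isWeaklyRegular_map_X {σ : Type u} {k : Type v} [CommRing k] {l : List σ} (hl : l.Nodup) :
    IsWeaklyRegular (MvPolynomial σ k) (l.map (X : σ → MvPolynomial σ k)) := by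
  refine ⟨fun i hi => ?_⟩
  rw [List.length_map] at hi
  have hspan : Ideal.ofList ((l.map (X : σ → MvPolynomial σ k)).take i) =
      Ideal.span (X '' {j | j ∈ l.take i}) := by
    rw [Ideal.ofList, ← List.map_take]
    congr 1
    exact Set.ext fun _ => List.mem_map
  have hmem : l[i] ∉ l.take i := fun h => by
    obtain ⟨j, hj, hji⟩ := List.mem_take_iff_getElem.mp h
    have := (hl.getElem_inj_iff).mp hji
    omega
  rw [smul_eq_mul, Ideal.mul_top, hspan, List.getElem_map,
    isSMulRegular_quotient_iff_mem_of_smul_mem]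
  intro q hq
  rw [smul_eq_mul, mem_ideal_span_X_image] at hq
  refine mem_ideal_span_X_image.mpr fun e he => ?_
  obtain ⟨j, hj, hje⟩ := hq (Finsupp.single l[i] 1 + e) (by
    rwa [mem_support_iff, coeff_X_mul, ← mem_support_iff])
  have hij : l[i] ≠ j := (ne_of_mem_of_not_mem hj hmem).symm
  exact ⟨j, hj, by simpa [Finsupp.single_apply, hij] using hje⟩

theorem isRegular_map_X {σ : Type u} {k : Type v} [CommRing k] [Nontrivial k] {l : List σ}
    (hl : l.Nodup) : IsRegular (MvPolynomial σ k) (l.map (X : σ → MvPolynomial σ k)) := by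
  refine ⟨isWeaklyRegular_map_X hl, fun htop => ?_⟩
  have hle : Ideal.ofList (l.map X) ≤ RingHom.ker (constantCoeff : MvPolynomial σ k →+* k) :=
    Ideal.span_le.mpr fun y hy => by
      obtain ⟨i, -, rfl⟩ := List.mem_map.mp hy
      exact constantCoeff_X (R := k) i
  rw [smul_eq_mul, Ideal.mul_top] at htop
  exact RingHom.ker_ne_top _ (top_le_iff.mp (htop.trans_le hle))

theorem isRegular_map_of_faithfullyFlat {A B : Type*} [CommRing A] [CommRing B]
    {f : A →+* B} (hf : f.FaithfullyFlat) {rs : List A} (h : IsRegular A rs) :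
    IsRegular B (rs.map f) := by
  algebraize [f]
  exact h.of_faithfullyFlat

end RegularSequence

section SymmetricAlgebra

open RingTheory.Sequence

theorem isRegular_map_of_linearIndepOn {k V S ι : Type*} [Field k] [AddCommGroup V]
    [Module k V] [CommRing S] [Algebra k S] {g : V →ₗ[k] S} (hg : IsSymmetricAlgebra g)
    {v : ι → V} {l : List ι} (hl : l.Nodup) (hv : LinearIndepOn k v {i | i ∈ l}) :
    IsRegular S (l.map fun i => g (v i)) := by
  let b := Module.Basis.extend hv.id_image
  let c (i : {i // i ∈ l}) : hv.id_image.extend (Set.subset_univ _) :=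
    ⟨v i, Module.Basis.subset_extend _ (Set.mem_image_of_mem v i.2)⟩
  have hc : Function.Injective c := fun i j hij => hv.injective (congrArg Subtype.val hij)
  let e := (SymmetricAlgebra.equivMvPolynomial b).symm.trans hg.equiv
  have he (i : {i // i ∈ l}) : e (X (c i)) = g (v i) := by
    simp [e, b, c]
  have hreg := isRegular_map_of_faithfullyFlat (f := e.toRingEquiv.toRingHom)
    (.of_bijective e.bijective) (isRegular_map_X ((List.nodup_attach.mpr hl).map hc))
  have hmap : ((l.attach.map c).map X).map e.toRingEquiv.toRingHom = l.map fun i => g (v i) := by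
    simp [he]
  rwa [hmap] at hreg

theorem finite_quotient_of_span_eq_top {k M S B : Type*} [CommRing k] [AddCommGroup M]
    [Module k M] [CommRing S] [Algebra k S] [CommRing B] [Algebra k B] {g : M →ₗ[k] S}
    (hg : IsSymmetricAlgebra g) {φ : S →ₐ[k] B} (hφ : φ.Finite) {s : Set M}
    (hs : Submodule.span k s = ⊤) {I : Ideal B} (hI : ∀ m ∈ s, φ (g m) ∈ I) :
    Module.Finite k (B ⧸ I) := by
  have hM (m : M) : φ (g m) ∈ I := by
    have hle : Submodule.span k s ≤ (I.restrictScalars k).comap (φ.toLinearMap ∘ₗ g) :=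
      Submodule.span_le.mpr hI
    exact hle (hs ▸ Submodule.mem_top)
  have hfac : (Ideal.Quotient.mkₐ k I).comp φ = (Algebra.ofId k (B ⧸ I)).comp (hg.lift 0) :=
    hg.algHom_ext <| LinearMap.ext fun m => by
      simpa [Ideal.Quotient.eq_zero_iff_mem] using hM m
  have hfin : ((Algebra.ofId k (B ⧸ I)).comp (hg.lift 0)).Finite :=
    hfac ▸ (AlgHom.Finite.of_surjective _ (Ideal.Quotient.mkₐ_surjective k I)).comp hφ
  exact RingHom.finite_algebraMap.mp (AlgHom.Finite.of_comp_finite hfin)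

end SymmetricAlgebra

section LinearForm

variable {k : Type u} [CommSemiring k] {τ : Type v} [Fintype τ]

/-- The linear form `∑ j, v_j T_j` in the variables `T_j`, as a linear function of its vector of
coefficients `v`. -/
noncomputable def linearForm : (τ → k) →ₗ[k] MvPolynomial τ k :=
  Fintype.linearCombination k X

theorem linearForm_apply (v : τ → k) : linearForm v = ∑ j, C (v j) * X j := by
  simp [linearForm, Fintype.linearCombination_apply, C_mul']

variable (k τ) in
theorem isSymmetricAlgebra_linearForm :
    IsSymmetricAlgebra (linearForm : (τ → k) →ₗ[k] MvPolynomial τ k) := by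
  classical
  convert SymmetricAlgebra.IsSymmetricAlgebra.mvPolynomial τ (Pi.basisFun k τ)
  ext
  simp [linearForm]

end LinearForm

namespace GLring

variable {k : Type u} [Field k] {d n : ℕ} {p : Fin n → ℕ} {lam : Fin n → Fin (d + 1) → k}

variable (p lam) in
/-- The structure map `k[T_0, …, T_d] → R` of the Geigle–Lenzing ring over its parameters. -/
noncomputable def paramHom : MvPolynomial (Fin (d + 1)) k →ₐ[k] GLring k d n p lam :=
  (Ideal.Quotient.mkₐ k _).comp (rename Sum.inl)

theorem paramHom_linearForm (i : Fin n) :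
    paramHom p lam (linearForm (lam i)) =
      Ideal.Quotient.mk (Ideal.span (Set.range (GLh k d n p lam))) (X (Sum.inr i) ^ p i) := by
  refine (Ideal.Quotient.eq.mpr ?_).symm
  have hrel : X (Sum.inr i) ^ p i - rename Sum.inl (linearForm (lam i)) = GLh k d n p lam i := by
    simp [GLh, linearForm_apply]
  exact hrel ▸ Ideal.subset_span ⟨i, rfl⟩

variable (p lam) in
/-- `R` arises from `k[T_0, …, T_d]` by adjoining a root of each polynomial `X ^ p_i - ℓ_i`. -/
noncomputable def equivAdjoinRoots : GLring k d n p lam ≃+*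
    AdjoinRoots fun i => Polynomial.X ^ p i - Polynomial.C (linearForm (lam i)) :=
  Ideal.quotientEquiv _ _
    ((renameEquiv k (Equiv.sumComm _ _)).trans
      (sumAlgEquiv k (Fin n) (Fin (d + 1)))).toRingEquiv <| by
    rw [Ideal.map_span, ← Set.range_comp]
    congr! 2
    funext i
    simp [GLh, linearForm_apply, algebraMap_eq]

theorem equivAdjoinRoots_paramHom (q : MvPolynomial (Fin (d + 1)) k) :
    equivAdjoinRoots p lam (paramHom p lam q) = algebraMap _ _ q := by
  have h : sumAlgEquiv k (Fin n) (Fin (d + 1)) (rename Sum.swap (rename Sum.inl q)) = C q := by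
    rw [rename_rename]
    exact DFunLike.congr_fun (sumAlgEquiv_comp_rename_inr k (Fin n) (Fin (d + 1))) q
  exact congrArg (Ideal.Quotient.mk _) h

theorem toRingHom_paramHom : (paramHom p lam).toRingHom =
    (equivAdjoinRoots p lam).symm.toRingHom.comp (algebraMap _ _) :=
  RingHom.ext fun q => (RingEquiv.eq_symm_apply _).mpr (equivAdjoinRoots_paramHom q)

variable (hp : ∀ i, 0 < p i)
include hp

variable (lam) in
theorem finite_paramHom : (paramHom p lam).Finite := by
  have := AdjoinRoots.finite_of_monic fun i =>
    Polynomial.monic_X_pow_sub_C (linearForm (lam i)) (hp i).ne'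
  rw [AlgHom.Finite, toRingHom_paramHom]
  exact .comp (.of_surjective _ (RingEquiv.surjective _)) (RingHom.finite_algebraMap.mpr this)

variable (lam) in
theorem faithfullyFlat_paramHom : (paramHom p lam).toRingHom.FaithfullyFlat := by
  have := AdjoinRoots.faithfullyFlat_of_monic
    (fun i => Polynomial.monic_X_pow_sub_C (linearForm (lam i)) (hp i).ne')
    (fun i => by simpa using hp i)
  rw [toRingHom_paramHom]
  exact RingHom.FaithfullyFlat.stableUnderComposition _ _
    (RingHom.faithfullyFlat_algebraMap_iff.mpr this) (.of_bijective (RingEquiv.bijective _))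

theorem isRegular_map_X_pow {l : List (Fin n)} (hl : l.Nodup)
    (hlam : LinearIndepOn k lam {i | i ∈ l}) :
    RingTheory.Sequence.IsRegular (GLring k d n p lam)
      (l.map fun i => Ideal.Quotient.mk (Ideal.span (Set.range (GLh k d n p lam)))
        (X (Sum.inr i) ^ p i)) := by
  have hreg := isRegular_map_of_faithfullyFlat (faithfullyFlat_paramHom lam hp) <|
    isRegular_map_of_linearIndepOn (isSymmetricAlgebra_linearForm k (Fin (d + 1))) hl hlam
  rw [List.map_map] at hreg
  have hpow := funext (paramHom_linearForm (p := p) (lam := lam))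
  exact hpow ▸ hreg

theorem finiteDimensional_quotient_X_pow {I : Set (Fin n)}
    (hlam : Submodule.span k (lam '' I) = ⊤) :
    FiniteDimensional k
      (GLring k d n p lam ⧸ Ideal.span
        ((fun i => Ideal.Quotient.mk (Ideal.span (Set.range (GLh k d n p lam)))
          (X (Sum.inr i) ^ p i)) '' I)) := by
  refine finite_quotient_of_span_eq_top (isSymmetricAlgebra_linearForm k (Fin (d + 1)))
    (finite_paramHom lam hp) hlam ?_
  rintro _ ⟨i, hi, rfl⟩
  rw [paramHom_linearForm]
  exact Ideal.subset_span (Set.mem_image_of_mem _ hi)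

end GLring

theorem X_pow_regular_and_quotient_finiteDimensional_general (k : Type*) [Field k]
    (d n : ℕ) (p : Fin n → ℕ) (hp : ∀ i, 0 < p i) (lam : Fin n → Fin (d + 1) → k)
    (I : Finset (Fin n)) :
    (LinearIndepOn k lam I → RingTheory.Sequence.IsRegular (GLring k d n p lam)
      ((I.sort (· ≤ ·)).map fun i =>
        Ideal.Quotient.mk (Ideal.span (Set.range (GLh k d n p lam)))
          (X (Sum.inr i) ^ p i))) ∧
    (Submodule.span k (lam '' I) = ⊤ → FiniteDimensional k
      (GLring k d n p lam ⧸ Ideal.span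
        ((fun i => Ideal.Quotient.mk (Ideal.span (Set.range (GLh k d n p lam)))
          (X (Sum.inr i) ^ p i)) '' (I : Set (Fin n))))) := by
  refine ⟨fun hI => GLring.isRegular_map_X_pow hp (I.sort_nodup _) ?_,
    GLring.finiteDimensional_quotient_X_pow hp⟩
  simpa only [Finset.mem_sort, Finset.setOfPred_mem] using hI

/-- Assume `n ≥ d + 1` and that the hyperplanes `ℓ_1,…,ℓ_n` are in
general position (any at most `d+1` of them are linearly independent). If
`J ⊆ {1,…,n}` has `|J| = n − d − 1`, then the images of the `X_i^{p_i}` for `i ∈ Jᶜ`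
form a regular sequence in `R`, and `F = R/(X_i^{p_i} ∣ i ∈ Jᶜ)` is a
finite-dimensional `k`-vector space. -/
theorem X_pow_regular_and_quotient_finiteDimensional (k : Type*) [Field k]
    (d n : ℕ) (hd : 1 ≤ d) (hn : d + 1 ≤ n) (p : Fin n → ℕ) (hp : ∀ i, 0 < p i)
    (lam : Fin n → Fin (d + 1) → k)
    (hgen : ∀ t : Finset (Fin n), t.card ≤ d + 1 →
      LinearIndependent k (fun i : t => lam i))
    (J : Finset (Fin n)) (hJ : J.card = n - d - 1) :
    RingTheory.Sequence.IsRegular (GLring k d n p lam)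
      ((Jᶜ.sort (· ≤ ·)).map fun i =>
        Ideal.Quotient.mk (Ideal.span (Set.range (GLh k d n p lam)))
          (X (Sum.inr i) ^ p i)) ∧
    FiniteDimensional k
      (GLring k d n p lam ⧸ Ideal.span
        ((fun i => Ideal.Quotient.mk (Ideal.span (Set.range (GLh k d n p lam)))
          (X (Sum.inr i) ^ p i)) '' (Jᶜ : Set (Fin n)))) := by
  have hcard : Jᶜ.card = d + 1 := by
    rw [Finset.card_compl, Fintype.card_fin]
    omega
  have hli : LinearIndepOn k lam (Jᶜ : Finset (Fin n)) := hgen Jᶜ hcard.le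
  have hspan : Submodule.span k (lam '' (Jᶜ : Finset (Fin n))) = ⊤ := by
    rw [Set.image_eq_range]
    exact hli.span_eq_top_of_card_eq_finrank' 
      ((Fintype.card_coe _).trans (hcard.trans (Module.finrank_fin_fun k).symm))
  rw [← Finset.coe_compl]
  exact (X_pow_regular_and_quotient_finiteDimensional_general k d n p hp lam Jᶜ).imp
    (· hli) (· hspan)
end
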